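/- For every ε > 0 there exists C_ε > 0 such that for every n₁, n₂ ≥ 1, ‖e_{n₁} e_{n₂}′‖_{L²(Θ)} ≤ C_ε (min(n₁, n₂))^ε ‖e_{n₂}′‖_{L²(Θ)}. -/

import Mathlib

/-- The Bessel function of order zero, defined by its power series. -/
noncomputable def J0 (x : ℝ) : ℝ :=
  ∑' j : ℕ, ((-1 : ℝ) ^ j / ((Nat.factorial j : ℝ)) ^ 2) * (x / 2) ^ (2 * j)

/-- The `L²(Θ)` norm of `J₀(z_n ·)`. -/
noncomputable def besselL2 (z : ℕ → ℝ) (n : ℕ) : ℝ :=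
  Real.sqrt (2 * Real.pi * ∫ r in (0 : ℝ)..1, (J0 (z n * r)) ^ 2 * r)

/-- The normalized Dirichlet eigenfunction `e_n(r) = J₀(z_n r)/‖J₀(z_n ·)‖_{L²(Θ)}`. -/
noncomputable def efun (z : ℕ → ℝ) (n : ℕ) (r : ℝ) : ℝ :=
  J0 (z n * r) / besselL2 z n

/-- The radial derivative `e_n′(r) = z_n J₀′(z_n r)/‖J₀(z_n ·)‖_{L²(Θ)}`. -/
noncomputable def efun' (z : ℕ → ℝ) (n : ℕ) (r : ℝ) : ℝ :=
  z n * deriv J0 (z n * r) / besselL2 z n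


/-- Power series with factorially bounded coefficients. -/
noncomputable def psB (c : ℕ → ℝ) (t : ℝ) : ℝ := ∑' j : ℕ, c j * t ^ j

/-- Coefficients of the derived series. -/
noncomputable def dB (c : ℕ → ℝ) (j : ℕ) : ℝ := (j + 1 : ℝ) * c (j + 1)

theorem dB_bound {c : ℕ → ℝ} (hc : ∀ j, |c j| ≤ 1 / (j.factorial : ℝ)) (j : ℕ) :
    |dB c j| ≤ 1 / (j.factorial : ℝ) := by
  unfold dB
  have h := hc (j + 1)
  rw [abs_mul, abs_of_pos (by positivity : (0:ℝ) < j + 1)]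
  have hf : (0:ℝ) < j.factorial := by positivity
  rw [Nat.factorial_succ] at h
  push_cast at h
  calc ((j:ℝ) + 1) * |c (j + 1)| ≤ ((j:ℝ) + 1) * (1 / (((j:ℝ) + 1) * j.factorial)) := by gcongr
    _ = 1 / (j.factorial : ℝ) := by field_simp

theorem psB_summable {c : ℕ → ℝ} (hc : ∀ j, |c j| ≤ 1 / (j.factorial : ℝ)) (t : ℝ) :
    Summable (fun j => c j * t ^ j) := by
  refine Summable.of_norm_bounded (g := fun j : ℕ => |t| ^ j / (j.factorial : ℝ))
    (Real.summable_pow_div_factorial |t|) ?_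
  intro j
  rw [Real.norm_eq_abs, abs_mul, abs_pow]
  calc |c j| * |t| ^ j ≤ 1 / (j.factorial : ℝ) * |t| ^ j := by gcongr; exact hc j
    _ = _ := by ring

theorem psB_hasDerivAt {c : ℕ → ℝ} (hc : ∀ j, |c j| ≤ 1 / (j.factorial : ℝ)) (t : ℝ) :
    HasDerivAt (psB c) (psB (dB c) t) t := by
  have key : ∀ y, |y| < |t| + 1 → ∀ n : ℕ,
      ‖c n * ((n : ℝ) * y ^ (n - 1))‖ ≤ (if n = 0 then 0 else (|t| + 1) ^ (n - 1) / ((n - 1).factorial : ℝ)) := by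
    intro y hy n
    cases n with
    | zero => simp
    | succ n =>
      have h := dB_bound hc n
      unfold dB at h
      have e : c (n + 1) * (((n + 1 : ℕ) : ℝ) * y ^ (n + 1 - 1)) = ((n + 1 : ℝ) * c (n + 1)) * y ^ n := by
        push_cast; ring
      rw [e, Real.norm_eq_abs, abs_mul, abs_pow]
      simp only [Nat.add_eq_zero_iff, one_ne_zero, and_false, if_false, Nat.add_sub_cancel]
      calc _ ≤ 1 / (n.factorial : ℝ) * (|t| + 1) ^ n := by gcongr
        _ = _ := by ring
  have hs : Summable (fun n : ℕ => (if n = 0 then (0:ℝ) else (|t| + 1) ^ (n - 1) / ((n - 1).factorial : ℝ))) := by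
    rw [← summable_nat_add_iff 1]
    simpa using Real.summable_pow_div_factorial (|t| + 1)
  have h := hasDerivAt_tsum_of_isPreconnected (g := fun (n : ℕ) (y : ℝ) => c n * y ^ n)
    (g' := fun (n : ℕ) (y : ℝ) => c n * ((n : ℝ) * y ^ (n - 1))) hs
    (t := Metric.ball (0:ℝ) (|t| + 1)) Metric.isOpen_ball
    (convex_ball _ _).isPreconnected
    (fun n y _ => (hasDerivAt_pow n y).const_mul (c n))
    (fun n y hy => key y (by simpa using hy) n)
    (y₀ := 0) (by simp; positivity) (psB_summable hc 0) (y := t) (by simp)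
  have e : (∑' n : ℕ, c n * ((n : ℝ) * t ^ (n - 1))) = psB (dB c) t := by
    have hsum : Summable (fun n : ℕ => c n * ((n : ℝ) * t ^ (n - 1))) :=
      Summable.of_norm_bounded hs (fun n => key t (by linarith) n)
    rw [hsum.tsum_eq_zero_add]
    unfold psB dB
    simp only [Nat.cast_zero, zero_mul, mul_zero, zero_add]
    refine tsum_congr fun n => ?_
    push_cast
    ring
  rw [e] at h
  exact h

/-- Coefficients of the Bessel series. -/
noncomputable def cB (j : ℕ) : ℝ := (-1 : ℝ) ^ j / ((Nat.factorial j : ℝ)) ^ 2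

theorem cB_bound (j : ℕ) : |cB j| ≤ 1 / (j.factorial : ℝ) := by
  unfold cB
  have h1 : (1:ℝ) ≤ j.factorial := by exact_mod_cast Nat.one_le_iff_ne_zero.2 (Nat.factorial_ne_zero j)
  rw [abs_div, abs_pow, abs_neg, abs_one, one_pow, abs_of_pos (by positivity)]
  apply one_div_le_one_div_of_le (by positivity)
  nlinarith

theorem J0_eq (x : ℝ) : J0 x = psB cB (x ^ 2 / 4) := by
  unfold J0 psB cB
  refine tsum_congr fun j => ?_
  rw [pow_mul]; congr 2; ring

theorem psB_ode (t : ℝ) : t * psB (dB (dB cB)) t + psB (dB cB) t + psB cB t = 0 := by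
  have s0 := psB_summable cB_bound t
  have s1 := psB_summable (dB_bound cB_bound) t
  have s2 := psB_summable (dB_bound (dB_bound cB_bound)) t
  have hc : ∀ j : ℕ, ((j:ℝ) + 1) ^ 2 * cB (j + 1) = - cB j := by
    intro j
    unfold cB
    rw [Nat.factorial_succ]; push_cast
    have hf : (0:ℝ) < j.factorial := by positivity
    field_simp
    ring
  have e2 : t * psB (dB (dB cB)) t = ∑' j : ℕ, (j : ℝ) * dB cB j * t ^ j := by
    have hs : Summable (fun j : ℕ => (j : ℝ) * dB cB j * t ^ j) := by
      rw [← summable_nat_add_iff 1]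
      refine (s2.mul_left t).congr fun j => ?_
      simp only [dB]; push_cast; ring
    rw [hs.tsum_eq_zero_add]
    unfold psB
    rw [← tsum_mul_left]
    simp only [Nat.cast_zero, zero_mul, zero_add]
    refine tsum_congr fun j => ?_
    simp only [dB]; push_cast; ring
  have hs : Summable (fun j : ℕ => (j : ℝ) * dB cB j * t ^ j) := by
    rw [← summable_nat_add_iff 1]
    refine (s2.mul_left t).congr fun j => ?_
    simp only [dB]; push_cast; ring
  rw [e2]
  unfold psB
  rw [← hs.tsum_add s1, ← (hs.add s1).tsum_add s0]
  rw [← tsum_zero (α := ℝ) (β := ℕ)]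
  refine tsum_congr fun j => ?_
  have := hc j
  simp only [dB]
  linear_combination t ^ j * this

theorem J0_hasDerivAt' (x : ℝ) : HasDerivAt J0 (x / 2 * psB (dB cB) (x ^ 2 / 4)) x := by
  have h1 : HasDerivAt (fun x : ℝ => x ^ 2 / 4) (x / 2) x := by
    have := (hasDerivAt_pow 2 x).div_const 4
    have e : ((2 : ℕ) : ℝ) * x ^ (2 - 1) / 4 = x / 2 := by push_cast; ring
    rwa [e] at this
  have h := (psB_hasDerivAt cB_bound (x ^ 2 / 4)).comp x h1
  have e : J0 = psB cB ∘ (fun x : ℝ => x ^ 2 / 4) := by funext y; exact J0_eq y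
  rw [e, mul_comm]; exact h

theorem J1_eq (x : ℝ) : deriv J0 x = x / 2 * psB (dB cB) (x ^ 2 / 4) := (J0_hasDerivAt' x).deriv

theorem J0_hasDerivAt (x : ℝ) : HasDerivAt J0 (deriv J0 x) x := by
  rw [J1_eq]; exact J0_hasDerivAt' x

theorem J1_hasDerivAt0 (x : ℝ) : HasDerivAt (deriv J0)
    (1 / 2 * psB (dB cB) (x ^ 2 / 4) + x / 2 * (psB (dB (dB cB)) (x ^ 2 / 4) * (x / 2))) x := by
  have h1 : HasDerivAt (fun x : ℝ => x ^ 2 / 4) (x / 2) x := by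
    have := (hasDerivAt_pow 2 x).div_const 4
    have e : ((2 : ℕ) : ℝ) * x ^ (2 - 1) / 4 = x / 2 := by push_cast; ring
    rwa [e] at this
  have h := (psB_hasDerivAt (dB_bound cB_bound) (x ^ 2 / 4)).comp x h1
  have h2 := ((hasDerivAt_id x).div_const 2).mul h
  have e : deriv J0 = (fun x : ℝ => id x / 2) * (psB (dB cB) ∘ (fun x : ℝ => x ^ 2 / 4)) := by
    funext y; exact J1_eq y
  rw [e]; exact h2

theorem J1_hasDerivAt {x : ℝ} (hx : x ≠ 0) : HasDerivAt (deriv J0) (- deriv J0 x / x - J0 x) x := by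
  convert J1_hasDerivAt0 x using 1
  rw [J1_eq, J0_eq]
  have := psB_ode (x ^ 2 / 4)
  field_simp
  linear_combination (-4) * this

theorem J0_cont : Continuous J0 := continuous_iff_continuousAt.2 fun x => (J0_hasDerivAt x).continuousAt
theorem J1_cont : Continuous (deriv J0) :=
  continuous_iff_continuousAt.2 fun x => (J1_hasDerivAt0 x).continuousAt
theorem J1_zero : deriv J0 0 = 0 := by rw [J1_eq]; simp
theorem J0_zero : J0 0 = 1 := by
  rw [J0_eq]; unfold psB
  rw [tsum_eq_single 0]
  · simp [cB]
  · intro j hj; simp [hj]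

/-- The decreasing energy. -/
noncomputable def FB (x : ℝ) : ℝ :=
  x * (J0 x ^ 2 + deriv J0 x ^ 2) + J0 x * deriv J0 x + J0 x ^ 2 / (2 * x)

theorem J_bound {x : ℝ} (hx : 0 ≤ x) : J0 x ^ 2 + deriv J0 x ^ 2 ≤ 1 := by
  have hanti : AntitoneOn (fun x => J0 x ^ 2 + deriv J0 x ^ 2) (Set.Ici 0) := by
    apply antitoneOn_of_hasDerivWithinAt_nonpos (convex_Ici 0)
      (f' := fun x => - 2 * deriv J0 x ^ 2 / x)
    · exact ((J0_cont.pow 2).add (J1_cont.pow 2)).continuousOn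
    · intro y hy
      rw [interior_Ici] at hy
      have hy0 : y ≠ 0 := (Set.mem_Ioi.1 hy).ne'
      have h := ((J0_hasDerivAt y).pow 2).add ((J1_hasDerivAt hy0).pow 2)
      refine (h.congr_deriv ?_).hasDerivWithinAt
      push_cast
      field_simp
      ring
    · intro y hy
      rw [interior_Ici] at hy
      have hy0 : 0 < y := hy
      have : 0 ≤ 2 * deriv J0 y ^ 2 / y := by positivity
      have e : - 2 * deriv J0 y ^ 2 / y = - (2 * deriv J0 y ^ 2 / y) := by ring
      rw [e]; linarith
  have h := hanti (Set.mem_Ici.2 le_rfl) (Set.mem_Ici.2 hx) hx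
  simpa [J0_zero, J1_zero] using h

theorem FB_hasDerivAt {x : ℝ} (hx : 0 < x) : HasDerivAt FB (- J0 x ^ 2 / (2 * x ^ 2)) x := by
  have h0 := J0_hasDerivAt x
  have h1 := J1_hasDerivAt hx.ne'
  have hid := hasDerivAt_id x
  have h := ((hid.mul ((h0.pow 2).add (h1.pow 2))).add (h0.mul h1)).add
    ((h0.pow 2).div (hid.const_mul 2) (by simpa using hx.ne'))
  refine (h.congr_deriv ?_)
  simp
  field_simp
  ring

theorem FB_ge0 {x : ℝ} (hx : 0 < x) : x * J0 x ^ 2 ≤ FB x := by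
  have e : FB x - x * J0 x ^ 2 = ((x * deriv J0 x + J0 x / 2) ^ 2 + J0 x ^ 2 / 4) / x := by
    unfold FB; field_simp; ring
  have : 0 ≤ ((x * deriv J0 x + J0 x / 2) ^ 2 + J0 x ^ 2 / 4) / x := by positivity
  linarith

theorem FB_ge1 {x : ℝ} (hx : 0 < x) : x * deriv J0 x ^ 2 ≤ 2 * FB x := by
  have e : 2 * FB x - x * deriv J0 x ^ 2 = ((x * deriv J0 x + J0 x) ^ 2 + 2 * (x * J0 x) ^ 2) / x := by
    unfold FB; field_simp; ring
  have : 0 ≤ ((x * deriv J0 x + J0 x) ^ 2 + 2 * (x * J0 x) ^ 2) / x := by positivity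
  linarith

theorem FB_anti {x y : ℝ} (hx : 0 < x) (hxy : x ≤ y) : FB y ≤ FB x := by
  have : AntitoneOn FB (Set.Ici x) := by
    apply antitoneOn_of_hasDerivWithinAt_nonpos (convex_Ici x)
      (f' := fun x => - J0 x ^ 2 / (2 * x ^ 2))
    · intro y hy
      exact (FB_hasDerivAt (lt_of_lt_of_le hx hy)).continuousAt.continuousWithinAt
    · intro y hy
      rw [interior_Ici] at hy
      exact (FB_hasDerivAt (lt_trans hx hy)).hasDerivWithinAt
    · intro y hy
      rw [neg_div]
      have : 0 ≤ J0 y ^ 2 / (2 * y ^ 2) := by positivity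
      linarith
  exact this (Set.mem_Ici.2 le_rfl) hxy hxy

theorem FB_lower {x y : ℝ} (hx : 0 < x) (hxy : x ≤ y) :
    FB x * Real.exp (-1 / (4 * x ^ 2)) ≤ FB y := by
  have hd : ∀ y : ℝ, 0 < y → HasDerivAt (fun y => FB y * Real.exp (-1 / (4 * y ^ 2)))
      ((FB y - y * J0 y ^ 2) / (2 * y ^ 3) * Real.exp (-1 / (4 * y ^ 2))) y := by
    intro y hy
    have hy0 := hy.ne'
    have h1 : HasDerivAt (fun y : ℝ => -1 / (4 * y ^ 2)) (1 / (2 * y ^ 3)) y := by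
      have := (hasDerivAt_const y (-1:ℝ)).div ((hasDerivAt_pow 2 y).const_mul 4) (by positivity)
      refine this.congr_deriv ?_
      simp
      field_simp
      ring
    refine ((FB_hasDerivAt hy).mul h1.exp).congr_deriv ?_
    field_simp
    ring
  have : MonotoneOn (fun y => FB y * Real.exp (-1 / (4 * y ^ 2))) (Set.Ici x) := by
    apply monotoneOn_of_hasDerivWithinAt_nonneg (convex_Ici x)
      (f' := fun y => (FB y - y * J0 y ^ 2) / (2 * y ^ 3) * Real.exp (-1 / (4 * y ^ 2)))
    · intro y hy
      exact (hd y (lt_of_lt_of_le hx hy)).continuousAt.continuousWithinAt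
    · intro y hy
      rw [interior_Ici] at hy
      exact (hd y (lt_trans hx hy)).hasDerivWithinAt
    · intro y hy
      rw [interior_Ici] at hy
      have hy0 : 0 < y := lt_trans hx hy
      have := FB_ge0 hy0
      have : 0 ≤ FB y - y * J0 y ^ 2 := by linarith
      positivity
  have h := this (Set.mem_Ici.2 le_rfl) hxy hxy
  refine h.trans ?_
  have hy0 : 0 < y := lt_of_lt_of_le hx hxy
  have hF : 0 ≤ FB y := le_trans (by positivity) (FB_ge0 hy0)
  have he : Real.exp (-1 / (4 * y ^ 2)) ≤ 1 := by
    rw [Real.exp_le_one_iff, neg_div]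
    have : 0 ≤ 1 / (4 * y ^ 2) := by positivity
    linarith
  exact mul_le_of_le_one_right hF he

theorem sturm_aux {a σ : ℝ} (ha : 0 < a) (h : ∀ x ∈ Set.Icc a (a + Real.pi), 0 < σ * J0 x) : False := by
  set W : ℝ → ℝ := fun x => Real.sqrt x * ((deriv J0 x + J0 x / (2 * x)) * (σ * Real.sin (x - a))
    - J0 x * (σ * Real.cos (x - a))) with hW
  have hd : ∀ x, 0 < x → HasDerivAt W (Real.sqrt x * (-(σ * J0 x) / (4 * x ^ 2)) * Real.sin (x - a)) x := by
    intro x hx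
    have h0 := J0_hasDerivAt x
    have h1 := J1_hasDerivAt hx.ne'
    have hid := hasDerivAt_id x
    have hs := ((hid.sub_const a).sin).const_mul σ
    have hc := ((hid.sub_const a).cos).const_mul σ
    have hsq := Real.hasDerivAt_sqrt hx.ne'
    have := hsq.mul (((h1.add (h0.div (hid.const_mul 2) (by simpa using hx.ne'))).mul hs).sub (h0.mul hc))
    refine this.congr_deriv ?_
    have e : 1 / (2 * Real.sqrt x) = Real.sqrt x / (2 * x) := by
      have := Real.mul_self_sqrt hx.le
      have hp := Real.sqrt_pos.2 hx
      field_simp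
      nlinarith
    rw [e]
    simp
    field_simp
    ring
  have hanti : AntitoneOn W (Set.Icc a (a + Real.pi)) := by
    apply antitoneOn_of_hasDerivWithinAt_nonpos (convex_Icc _ _)
      (f' := fun x => Real.sqrt x * (-(σ * J0 x) / (4 * x ^ 2)) * Real.sin (x - a))
    · intro y hy
      exact (hd y (lt_of_lt_of_le ha hy.1)).continuousAt.continuousWithinAt
    · intro y hy
      rw [interior_Icc] at hy
      exact (hd y (lt_trans ha hy.1)).hasDerivWithinAt
    · intro y hy
      rw [interior_Icc] at hy
      have h1 := h y ⟨hy.1.le, hy.2.le⟩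
      have h2 : 0 ≤ Real.sin (y - a) :=
        Real.sin_nonneg_of_nonneg_of_le_pi (by linarith [hy.1]) (by linarith [hy.2])
      have : 0 ≤ Real.sqrt y * ((σ * J0 y) / (4 * y ^ 2)) * Real.sin (y - a) := by positivity
      have e : Real.sqrt y * (-(σ * J0 y) / (4 * y ^ 2)) * Real.sin (y - a)
        = - (Real.sqrt y * ((σ * J0 y) / (4 * y ^ 2)) * Real.sin (y - a)) := by ring
      rw [e]; linarith
  have hpi := Real.pi_pos
  have hle : a ≤ a + Real.pi := by linarith
  have hm := hanti (Set.left_mem_Icc.2 hle) (Set.right_mem_Icc.2 hle) hle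
  have ea : W a = - (Real.sqrt a * (σ * J0 a)) := by simp [hW, mul_comm]
  have eb : W (a + Real.pi) = Real.sqrt (a + Real.pi) * (σ * J0 (a + Real.pi)) := by simp [hW, mul_comm]
  rw [ea, eb] at hm
  have p1 := mul_pos (Real.sqrt_pos.2 ha) (h a (Set.left_mem_Icc.2 hle))
  have p2 := mul_pos (Real.sqrt_pos.2 (by linarith : 0 < a + Real.pi)) (h _ (Set.right_mem_Icc.2 hle))
  linarith

theorem sturm {a : ℝ} (ha : 0 < a) : ∃ x ∈ Set.Icc a (a + Real.pi), J0 x = 0 := by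
  by_contra! hne
  have hpi := Real.pi_pos
  have hle : a ≤ a + Real.pi := by linarith
  have hpc : IsPreconnected (Set.Icc a (a + Real.pi)) := isPreconnected_Icc
  have hsame : ∀ x ∈ Set.Icc a (a + Real.pi), 0 < J0 a * J0 x := by
    intro x hx
    by_contra! hneg
    have hc : ContinuousOn (fun x => J0 a * J0 x) (Set.Icc a (a + Real.pi)) :=
      (continuous_const.mul J0_cont).continuousOn
    have hsub := hpc.intermediate_value hx (Set.left_mem_Icc.2 hle) hc
    obtain ⟨y, hy, hy0⟩ := hsub ⟨hneg, mul_self_nonneg (J0 a)⟩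
    rcases mul_eq_zero.1 hy0 with h | h
    · exact hne a (Set.left_mem_Icc.2 hle) h
    · exact hne y hy h
  exact sturm_aux ha hsame

theorem int_J0 {z : ℝ} (hz : 0 < z) (h0 : J0 z = 0) :
    ∫ r in (0 : ℝ)..1, (J0 (z * r)) ^ 2 * r = deriv J0 z ^ 2 / 2 := by
  have hc0 : Continuous fun r => J0 (z * r) := J0_cont.comp (continuous_const.mul continuous_id)
  have hc1 : Continuous fun r => deriv J0 (z * r) := J1_cont.comp (continuous_const.mul continuous_id)
  rw [intervalIntegral.integral_eq_sub_of_hasDerivAt_of_le (by norm_num)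
    (f := fun r => r ^ 2 / 2 * (J0 (z * r) ^ 2 + deriv J0 (z * r) ^ 2))]
  · simp [h0]; ring
  · exact (by fun_prop : Continuous _).continuousOn
  · intro r hr
    have hr0 : 0 < r := hr.1
    have hm : HasDerivAt (fun r => z * r) z r := by simpa using (hasDerivAt_id r).const_mul z
    have g0 := (J0_hasDerivAt (z * r)).comp r hm
    have g1 := (J1_hasDerivAt (mul_pos hz hr0).ne').comp r hm
    refine ((((hasDerivAt_pow 2 r).div_const 2).mul ((g0.pow 2).add (g1.pow 2)))).congr_deriv ?_
    simp
    field_simp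
    ring
  · exact (by fun_prop : Continuous _).intervalIntegrable _ _

theorem int_J1 {z : ℝ} (hz : 0 < z) (h0 : J0 z = 0) :
    ∫ r in (0 : ℝ)..1, (deriv J0 (z * r)) ^ 2 * r = deriv J0 z ^ 2 / 2 := by
  have hc0 : Continuous fun r => J0 (z * r) := J0_cont.comp (continuous_const.mul continuous_id)
  have hc1 : Continuous fun r => deriv J0 (z * r) := J1_cont.comp (continuous_const.mul continuous_id)
  rw [intervalIntegral.integral_eq_sub_of_hasDerivAt_of_le (by norm_num)
    (f := fun r => r ^ 2 / 2 * (J0 (z * r) ^ 2 + deriv J0 (z * r) ^ 2)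
      + r * (J0 (z * r) * deriv J0 (z * r)) / z)]
  · simp [h0]; ring
  · exact (by fun_prop : Continuous _).continuousOn
  · intro r hr
    have hr0 : 0 < r := hr.1
    have hm : HasDerivAt (fun r => z * r) z r := by simpa using (hasDerivAt_id r).const_mul z
    have g0 := (J0_hasDerivAt (z * r)).comp r hm
    have g1 := (J1_hasDerivAt (mul_pos hz hr0).ne').comp r hm
    refine (((((hasDerivAt_pow 2 r).div_const 2).mul ((g0.pow 2).add (g1.pow 2)))).add
      (((hasDerivAt_id r).mul (g0.mul g1)).div_const z)).congr_deriv ?_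
    simp
    field_simp
    ring
  · exact (by fun_prop : Continuous _).intervalIntegrable _ _

theorem interp_aux {p B m r δ : ℝ} (hp : 0 ≤ p) (hB : 0 < B) (hm : 0 < m) (hr : 0 < r)
    (hδ : 0 < δ) (hδ1 : δ ≤ 1) (h1 : p ≤ B * m) (h2 : p * r ≤ B) :
    p ≤ B * m ^ δ * r ^ (δ - 1) := by
  have h3 : p ≤ B / r := by rwa [le_div_iff₀ hr]
  have e : p = p ^ δ * p ^ (1 - δ) := by
    rcases hp.eq_or_lt with h | h
    · rw [← h, Real.zero_rpow hδ.ne', zero_mul]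
    · rw [← Real.rpow_add h]; simp
  calc p = p ^ δ * p ^ (1 - δ) := e
    _ ≤ (B * m) ^ δ * (B / r) ^ (1 - δ) := by
        have : 0 ≤ 1 - δ := by linarith
        gcongr
    _ = B * m ^ δ * r ^ (δ - 1) := by
        rw [Real.mul_rpow hB.le hm.le, Real.div_rpow hB.le hr.le]
        have e1 : B ^ δ * B ^ (1 - δ) = B := by rw [← Real.rpow_add hB]; simp
        have e2 : r ^ (δ - 1) = (r ^ (1 - δ))⁻¹ := by rw [← Real.rpow_neg hr.le]; congr 1; ring
        rw [e2, div_eq_mul_inv]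
        linear_combination (m ^ δ * (r ^ (1 - δ))⁻¹) * e1

theorem prod_aux {p q B z₁ z₂ r δ : ℝ} (hp : 0 ≤ p) (hq : 0 ≤ q) (hB : 0 < B) (hz₁ : 0 < z₁)
    (hz₂ : 0 < z₂) (hr : 0 < r) (hδ : 0 < δ) (hδ1 : δ ≤ 1) (h1 : p ≤ B * z₁) (h2 : p * r ≤ B)
    (h3 : q ≤ B * z₂) (h4 : q * r ≤ B) :
    p * q * r ≤ B ^ 2 * (min z₁ z₂) ^ δ * r ^ (δ - 1) := by
  rcases le_total z₁ z₂ with h | h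
  · rw [min_eq_left h]
    have := interp_aux hp hB hz₁ hr hδ hδ1 h1 h2
    calc p * q * r = p * (q * r) := by ring
      _ ≤ (B * z₁ ^ δ * r ^ (δ - 1)) * B := by gcongr
      _ = _ := by ring
  · rw [min_eq_right h]
    have := interp_aux hq hB hz₂ hr hδ hδ1 h3 h4
    calc p * q * r = q * (p * r) := by ring
      _ ≤ (B * z₂ ^ δ * r ^ (δ - 1)) * B := by gcongr
      _ = _ := by ring

/-- Bilinear estimate with one derivative: for every `ε > 0` there is `C_ε` with
`‖e_{n₁} e_{n₂}′‖_{L²(Θ)} ≤ C_ε (min(n₁,n₂))^ε ‖e_{n₂}′‖_{L²(Θ)}` for all `n₁, n₂ ≥ 1`. -/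
theorem eigenfunction_bilinear_deriv_L2
    (z : ℕ → ℝ)
    (hzpos : ∀ n, 1 ≤ n → 0 < z n)
    (hzmono : ∀ m n, 1 ≤ m → m < n → z m < z n)
    (hzzero : ∀ n, 1 ≤ n → J0 (z n) = 0)
    (hzall : ∀ x : ℝ, 0 < x → J0 x = 0 → ∃ n, 1 ≤ n ∧ z n = x) :
    ∀ ε : ℝ, 0 < ε → ∃ C : ℝ, 0 < C ∧ ∀ n₁ n₂ : ℕ, 1 ≤ n₁ → 1 ≤ n₂ →
      Real.sqrt (2 * Real.pi * ∫ r in (0 : ℝ)..1, (efun z n₁ r * efun' z n₂ r) ^ 2 * r) ≤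
        C * ((min n₁ n₂ : ℕ) : ℝ) ^ ε *
          Real.sqrt (2 * Real.pi * ∫ r in (0 : ℝ)..1, (efun' z n₂ r) ^ 2 * r) := by
  intro ε hε
  have hz1 := hzpos 1 le_rfl
  have hzge : ∀ n, 1 ≤ n → z 1 ≤ z n := by
    intro n hn
    rcases hn.eq_or_lt with h | h
    · rw [← h]
    · exact (hzmono 1 n le_rfl h).le
  -- the base point
  obtain ⟨a, ha⟩ : ∃ a, a = z 1 / 2 := ⟨_, rfl⟩
  have ha0 : 0 < a := by rw [ha]; linarith
  have hJa : J0 a ≠ 0 := by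
    intro h
    obtain ⟨n, hn, hna⟩ := hzall a ha0 h
    have := hzge n hn
    linarith
  have hFa : 0 < FB a := lt_of_lt_of_le (by positivity) (FB_ge0 ha0)
  obtain ⟨c, hc⟩ : ∃ c, c = FB a * Real.exp (-1 / (4 * a ^ 2)) := ⟨_, rfl⟩
  have hc0 : 0 < c := by rw [hc]; positivity
  obtain ⟨A, hA⟩ : ∃ A, A = a + 2 * FB a := ⟨_, rfl⟩
  have hA0 : 0 < A := by rw [hA]; positivity
  have hbJ0 : ∀ x, 0 < x → x * J0 x ^ 2 ≤ A := by
    intro x hx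
    rcases le_total x a with h | h
    · have := J_bound hx.le
      nlinarith [sq_nonneg (J0 x), sq_nonneg (deriv J0 x)]
    · have h1 := FB_ge0 hx
      have h2 := FB_anti ha0 h
      linarith
  have hbJ1 : ∀ x, 0 < x → x * deriv J0 x ^ 2 ≤ A := by
    intro x hx
    rcases le_total x a with h | h
    · have := J_bound hx.le
      nlinarith [sq_nonneg (J0 x), sq_nonneg (deriv J0 x)]
    · have h1 := FB_ge1 hx
      have h2 := FB_anti ha0 h
      linarith
  have hlow : ∀ n, 1 ≤ n → c ≤ z n * deriv J0 (z n) ^ 2 := by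
    intro n hn
    have h := FB_lower ha0 (by have := hzge n hn; linarith : a ≤ z n)
    rw [hc]
    refine h.trans (le_of_eq ?_)
    simp [FB, hzzero n hn]
  have hdpos : ∀ n, 1 ≤ n → 0 < deriv J0 (z n) ^ 2 := by
    intro n hn
    have := hlow n hn
    have := hzpos n hn
    by_contra! hneg
    nlinarith
  -- linear growth of the zeros
  obtain ⟨K, hK⟩ : ∃ K, K = z 1 + 5 := ⟨_, rfl⟩
  have hK0 : 0 < K := by rw [hK]; linarith
  have hgrow : ∀ n : ℕ, 1 ≤ n → z n ≤ K * n := by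
    intro n hn
    induction n, hn using Nat.le_induction with
    | base => simp; linarith
    | succ n hn ih =>
      have hzn := hzpos n hn
      obtain ⟨x, hx, hx0⟩ := sturm (a := z n + 1) (by linarith)
      obtain ⟨k, hk, hkx⟩ := hzall x (by linarith [hx.1]) hx0
      have hkn : n < k := by
        by_contra! hle
        rcases hle.eq_or_lt with h | h
        · rw [h] at hkx; linarith [hx.1]
        · have := hzmono k n hk h; linarith [hx.1]
      have : z (n + 1) ≤ z k := by
        rcases (Nat.succ_le_of_lt hkn).eq_or_lt with h | h
        · rw [← h]
        · exact (hzmono (n + 1) k (by omega) h).le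
      have hpi := Real.pi_lt_four
      have := hx.2
      push_cast
      nlinarith
  have hpi := Real.pi_pos
  have hN : ∀ n, 1 ≤ n → besselL2 z n ^ 2 = Real.pi * deriv J0 (z n) ^ 2 := by
    intro n hn
    unfold besselL2
    rw [int_J0 (hzpos n hn) (hzzero n hn), Real.sq_sqrt (by positivity)]
    ring
  obtain ⟨B, hB⟩ : ∃ B, B = (A + 1) / (Real.pi * c) := ⟨_, rfl⟩
  have hB0 : 0 < B := by rw [hB]; positivity
  have hgen : ∀ n, 1 ≤ n → ∀ s r : ℝ, 0 < r → 0 ≤ s → s ≤ 1 → z n * r * s ≤ A →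
      s / (besselL2 z n ^ 2) ≤ B * z n ∧ s / (besselL2 z n ^ 2) * r ≤ B := by
    intro n hn s r hr hs hs1 hsA
    rw [hN n hn]
    have hd := hdpos n hn
    have hl := hlow n hn
    have hz := hzpos n hn
    constructor
    · rw [div_le_iff₀ (by positivity), hB]
      calc s ≤ 1 * 1 := by linarith
        _ ≤ (A + 1) * ((z n * deriv J0 (z n) ^ 2) / c) := by
            gcongr
            · linarith
            · rwa [one_le_div hc0]
        _ = _ := by field_simp
    · rw [hB, div_mul_eq_mul_div, div_le_div_iff₀ (by positivity) (by positivity)]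
      calc s * r * (Real.pi * c) ≤ s * r * (Real.pi * (z n * deriv J0 (z n) ^ 2)) := by gcongr
        _ = (z n * r * s) * (Real.pi * deriv J0 (z n) ^ 2) := by ring
        _ ≤ (A + 1) * (Real.pi * deriv J0 (z n) ^ 2) := by gcongr; linarith
  obtain ⟨δ, hδ⟩ : ∃ δ, δ = min (2 * ε) 1 := ⟨_, rfl⟩
  have hδ0 : 0 < δ := by rw [hδ]; apply lt_min <;> linarith
  have hδ1 : δ ≤ 1 := by rw [hδ]; exact min_le_right _ _
  have hδ2 : δ ≤ 2 * ε := by rw [hδ]; exact min_le_left _ _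
  refine ⟨Real.sqrt (2 * Real.pi * B ^ 2 * K ^ δ / δ), Real.sqrt_pos.2 (by positivity), ?_⟩
  intro n₁ n₂ hn₁ hn₂
  have hz₁ := hzpos n₁ hn₁
  have hz₂ := hzpos n₂ hn₂
  have hNpos₁ : 0 < besselL2 z n₁ ^ 2 := by rw [hN n₁ hn₁]; have := hdpos n₁ hn₁; positivity
  have hNpos₂ : 0 < besselL2 z n₂ ^ 2 := by rw [hN n₂ hn₂]; have := hdpos n₂ hn₂; positivity
  -- the right-hand side
  have hR : Real.sqrt (2 * Real.pi * ∫ r in (0 : ℝ)..1, (efun' z n₂ r) ^ 2 * r) = z n₂ := by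
    have e : ∀ r : ℝ, (efun' z n₂ r) ^ 2 * r
        = (z n₂ ^ 2 / besselL2 z n₂ ^ 2) * ((deriv J0 (z n₂ * r)) ^ 2 * r) := by
      intro r; unfold efun'; rw [div_pow, mul_pow]; ring
    simp_rw [e]
    rw [intervalIntegral.integral_const_mul, int_J1 hz₂ (hzzero n₂ hn₂), hN n₂ hn₂]
    have hd := hdpos n₂ hn₂
    have e2 : 2 * Real.pi * (z n₂ ^ 2 / (Real.pi * deriv J0 (z n₂) ^ 2) * (deriv J0 (z n₂) ^ 2 / 2))
        = z n₂ ^ 2 := by have hd1 : deriv J0 (z n₂) ≠ 0 := fun h => by simp [h] at hd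
                         field_simp
    rw [e2, Real.sqrt_sq hz₂.le]
  rw [hR]
  have hcont₁ : Continuous (efun z n₁) := by
    unfold efun
    exact (J0_cont.comp (continuous_const.mul continuous_id)).div_const _
  have hcont₂ : Continuous (efun' z n₂) := by
    unfold efun'
    exact ((continuous_const.mul (J1_cont.comp (continuous_const.mul continuous_id)))).div_const _
  obtain ⟨m, hm⟩ : ∃ m, m = min (z n₁) (z n₂) := ⟨_, rfl⟩
  have hm0 : 0 < m := by rw [hm]; exact lt_min hz₁ hz₂
  have hI : ∫ r in (0 : ℝ)..1, (efun z n₁ r * efun' z n₂ r) ^ 2 * r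
      ≤ z n₂ ^ 2 * (B ^ 2 * m ^ δ) * (1 / δ) := by
    have hIeq : ∫ r in (0 : ℝ)..1, z n₂ ^ 2 * (B ^ 2 * m ^ δ) * r ^ (δ - 1)
        = z n₂ ^ 2 * (B ^ 2 * m ^ δ) * (1 / δ) := by
      rw [intervalIntegral.integral_const_mul, integral_rpow (Or.inl (by linarith))]
      simp [Real.zero_rpow hδ0.ne']
    rw [← hIeq]
    apply intervalIntegral.integral_mono_on_of_le_Ioo (by norm_num)
    · exact (((hcont₁.mul hcont₂).pow 2).mul continuous_id).intervalIntegrable _ _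
    · exact (intervalIntegral.intervalIntegrable_rpow' (by linarith)).const_mul _
    · intro r hr
      have hr0 : 0 < r := hr.1
      have b1 := J_bound (mul_pos hz₁ hr0).le
      have b2 := J_bound (mul_pos hz₂ hr0).le
      obtain ⟨g1, g2⟩ := hgen n₁ hn₁ (J0 (z n₁ * r) ^ 2) r hr0 (sq_nonneg _)
        (by linarith [sq_nonneg (deriv J0 (z n₁ * r))]) (hbJ0 _ (mul_pos hz₁ hr0))
      obtain ⟨g3, g4⟩ := hgen n₂ hn₂ (deriv J0 (z n₂ * r) ^ 2) r hr0 (sq_nonneg _)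
        (by linarith [sq_nonneg (J0 (z n₂ * r))]) (hbJ1 _ (mul_pos hz₂ hr0))
      have := prod_aux (by positivity) (by positivity) hB0 hz₁ hz₂ hr0 hδ0 hδ1 g1 g2 g3 g4
      rw [← hm] at this
      calc (efun z n₁ r * efun' z n₂ r) ^ 2 * r
          = z n₂ ^ 2 * (J0 (z n₁ * r) ^ 2 / besselL2 z n₁ ^ 2 *
              (deriv J0 (z n₂ * r) ^ 2 / besselL2 z n₂ ^ 2) * r) := by
            unfold efun efun'; rw [mul_pow, div_pow, div_pow, mul_pow]; ring
        _ ≤ z n₂ ^ 2 * (B ^ 2 * m ^ δ * r ^ (δ - 1)) := by gcongr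
        _ = _ := by ring
  obtain ⟨M, hM⟩ : ∃ M : ℝ, M = ((min n₁ n₂ : ℕ) : ℝ) := ⟨_, rfl⟩
  rw [← hM]
  have hM1 : 1 ≤ M := by rw [hM]; exact_mod_cast le_min hn₁ hn₂
  have hmM : m ≤ K * M := by
    rw [hm, hM]
    rcases le_total n₁ n₂ with h | h
    · rw [min_eq_left h]; exact (min_le_left _ _).trans (hgrow n₁ hn₁)
    · rw [min_eq_right h]; exact (min_le_right _ _).trans (hgrow n₂ hn₂)
  have hM0 : 0 ≤ M := by linarith
  have hmδ : m ^ δ ≤ K ^ δ * (M ^ ε) ^ 2 := by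
    calc m ^ δ ≤ (K * M) ^ δ := by gcongr
      _ = K ^ δ * M ^ δ := Real.mul_rpow hK0.le hM0
      _ ≤ K ^ δ * M ^ (2 * ε) := by gcongr
      _ = K ^ δ * (M ^ ε) ^ 2 := by
        rw [← Real.rpow_natCast (M ^ ε), ← Real.rpow_mul hM0]
        congr 2; push_cast; ring
  apply Real.sqrt_le_iff.2
  refine ⟨by positivity, ?_⟩
  rw [mul_pow, mul_pow, Real.sq_sqrt (by positivity)]
  calc 2 * Real.pi * ∫ r in (0 : ℝ)..1, (efun z n₁ r * efun' z n₂ r) ^ 2 * r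
      ≤ 2 * Real.pi * (z n₂ ^ 2 * (B ^ 2 * (K ^ δ * (M ^ ε) ^ 2)) * (1 / δ)) := by
        gcongr
        refine hI.trans ?_
        gcongr
    _ = _ := by ring
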